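/- There is a constant C > 0 such that the following holds for all positive integers r, a, n, N, N' with r ≥ 2a, n ≥ (r/a)², and N ≥ 2^{C·n·a²·r^{−1}·log(r/a)}·N'. Suppose the edges of the grid graph Γ_{N,r} are colored red and blue in such a way that every vertical edge (an edge between two vertices in the same column) is red. Then either there is a blue K_n, or there exist a set X of N' columns, a column x ∈ X, and a set Y of a rows such that for every column x' ∈ X with x' ≠ x and every row y ∈ Y, the horizontal edge between (x,y) and (x',y) is red. -/

import Mathlib

/-- Adjacency in the grid graph `K_m □ K_n`. -/
def GridAdj {m n : ℕ} (p q : Fin m × Fin n) : Prop :=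
  (p.1 = q.1 ∧ p.2 ≠ q.2) ∨ (p.1 ≠ q.1 ∧ p.2 = q.2)

/-- A blue `K_n` in an edge-coloring of `Γ_{N,r}`: `n` pairwise-adjacent vertices with
all edges between them blue (blue = `false`). -/
def HasBlueGridClique (N r n : ℕ) (χ : Sym2 (Fin N × Fin r) → Bool) : Prop :=
  ∃ S : Finset (Fin N × Fin r), S.card = n ∧
    ∀ p ∈ S, ∀ q ∈ S, p ≠ q → GridAdj p q ∧ χ s(p, q) = false

/-- Pairwise blue in row `y`. -/
def BlueIn {α ρ : Type*} (Red : ρ → α → α → Prop) (y : ρ) (J : Finset α) : Prop :=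
  ∀ p ∈ J, ∀ q ∈ J, p ≠ q → ¬ Red y p q

lemma markov_card {α : Type*} (s : Finset α) (p : α → Prop) [DecidablePred p] (f : α → ℕ) (c : ℕ)
    (h : ∀ x ∈ s, p x → c ≤ f x) : c * (s.filter p).card ≤ ∑ x ∈ s, f x := by
  calc c * (s.filter p).card = ∑ x ∈ s.filter p, c := by simp [mul_comm]
    _ ≤ ∑ x ∈ s.filter p, f x := Finset.sum_le_sum (by
        intro x hx; rw [Finset.mem_filter] at hx; exact h x hx.1 hx.2)
    _ ≤ ∑ x ∈ s, f x := Finset.sum_le_sum_of_subset (Finset.filter_subset _ _)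

lemma double_count {α β : Type*} (s : Finset α) (t : Finset β) (p : α → β → Prop)
    [∀ x, DecidablePred (fun y => p x y)] [∀ y, DecidablePred (fun x => p x y)] :
    ∑ x ∈ s, (t.filter (fun y => p x y)).card = ∑ y ∈ t, (s.filter (fun x => p x y)).card := by
  simp only [Finset.card_filter]
  exact Finset.sum_comm

open Classical in
lemma triv_bound {α ρ : Type*} (Red : ρ → α → α → Prop)
    (hsymm : ∀ y p q, Red y p q → Red y q p) (M : Finset ρ) (b m : ℕ)
    (hM : M.card ≤ m) (hb : m + 1 ≤ 12 * b) :
    ∀ F : ℕ, ∀ V : Finset α, ∀ f : ρ → ℕ,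
      (∀ p ∈ V, ∀ q ∈ V, p ≠ q → b ≤ (M.filter (fun y => ¬ Red y p q)).card) →
      (∀ y ∈ M, ∀ J ⊆ V, BlueIn Red y J → J.card ≤ f y) →
      ∑ y ∈ M, f y ≤ F → V.card ≤ 2 ^ (12 * F) := by
  intro F
  induction F using Nat.strong_induction_on with
  | _ F ih =>
  intro V f hV hf hF
  by_cases hc : V.card ≤ 1
  · exact hc.trans Nat.one_le_two_pow
  push Not at hc
  obtain ⟨x, hx, x', hx', hne⟩ := Finset.one_lt_card.mp hc
  have hf1 : ∀ y ∈ M, 1 ≤ f y := by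
    intro y hy
    have := hf y hy {x} (by simpa using hx) (by
      intro p hp q hq hpq; simp at hp hq; exact absurd (hp.trans hq.symm) hpq)
    simpa using this
  have key : ∀ v ∈ V, v ≠ x →
      ∑ y ∈ M, (if Red y x v then f y else f y - 1) + b ≤ F := by
    intro v hv hvx
    have h1 := hV x hx v hv (Ne.symm hvx)
    have h2 : ∑ y ∈ M, (if Red y x v then f y else f y - 1)
        + (M.filter (fun y => ¬ Red y x v)).card = ∑ y ∈ M, f y := by
      rw [Finset.card_filter, ← Finset.sum_add_distrib]
      apply Finset.sum_congr rfl
      intro y hy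
      have := hf1 y hy
      by_cases h : Red y x v <;> simp [h]
      omega
    omega
  have hbF := key x' hx' (Ne.symm hne)
  have hfib : ∀ R ∈ M.powerset,
      ((V.erase x).filter (fun v => M.filter (fun y => Red y x v) = R)).card
        ≤ 2 ^ (12 * (F - b)) := by
    intro R _
    rcases Finset.eq_empty_or_nonempty
      ((V.erase x).filter (fun v => M.filter (fun y => Red y x v) = R)) with h0 | ⟨v, hv⟩
    · rw [h0]; simp
    have hsub : (V.erase x).filter (fun v => M.filter (fun y => Red y x v) = R) ⊆ V :=
      (Finset.filter_subset _ _).trans (Finset.erase_subset _ _)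
    simp only [Finset.mem_filter, Finset.mem_erase] at hv
    obtain ⟨⟨hvx, hvV⟩, hvR⟩ := hv
    refine ih (F - b) (by omega) _ (fun y => if Red y x v then f y else f y - 1) ?_ ?_ ?_
    · intro p hp q hq hpq
      exact hV p (hsub hp) q (hsub hq) hpq
    · intro y hy J hJ hJb
      by_cases hr : Red y x v
      · simp only [hr, if_true]
        exact hf y hy J (hJ.trans hsub) hJb
      · simp only [hr, if_false]
        have hblue : ∀ w ∈ J, ¬ Red y x w ∧ w ≠ x ∧ w ∈ V := by
          intro w hw
          have hw' := hJ hw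
          simp only [Finset.mem_filter, Finset.mem_erase] at hw'
          refine ⟨?_, hw'.1.1, hw'.1.2⟩
          intro hh
          have : y ∈ M.filter (fun y => Red y x w) := by simp [hy, hh]
          rw [hw'.2, ← hvR] at this
          simp at this
          exact hr this.2
        have hxJ : x ∉ J := fun h => (hblue x h).2.1 rfl
        have := hf y hy (insert x J) (by
          intro w hw
          rcases Finset.mem_insert.mp hw with rfl | hw
          · exact hx
          · exact (hblue w hw).2.2) (by
          intro p hp q hq hpq
          rcases Finset.mem_insert.mp hp with hp | hp <;>
          rcases Finset.mem_insert.mp hq with hq | hq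
          · exact absurd (hp.trans hq.symm) hpq
          · rw [hp]; exact (hblue q hq).1
          · rw [hq]; exact fun h => (hblue p hp).1 (hsymm _ _ _ h)
          · exact hJb p hp q hq hpq)
        rw [Finset.card_insert_of_notMem hxJ] at this
        omega
    · have := key v hvV hvx
      omega
  have hcard := Finset.card_le_mul_card_image_of_maps_to
    (s := V.erase x) (t := M.powerset) (f := fun v => M.filter (fun y => Red y x v))
    (fun v _ => by simp) _ hfib
  rw [Finset.card_erase_of_mem hx, Finset.card_powerset] at hcard
  have h3 : 2 ^ (12 * (F - b)) * 2 ^ M.card ≤ 2 ^ (12 * F - 1) := by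
    rw [← pow_add]
    exact Nat.pow_le_pow_right (by norm_num) (by omega)
  have h4 : 2 ^ (12 * F) = 2 * 2 ^ (12 * F - 1) := by
    rw [← pow_succ']; congr 1; omega
  have h5 : 1 ≤ 2 ^ (12 * F - 1) := Nat.one_le_two_pow
  omega

open Classical in
lemma pattern_count {β : Type*} (U : Finset β) (k : ℕ) (l : ℝ) (h0 : 0 < l) (h1 : l ≤ 1) :
    ((U.powerset.filter (fun S => S.card ≤ k)).card : ℝ) * l ^ k ≤ (1 + l) ^ U.card := by
  have h : ∑ S ∈ U.powerset, l ^ S.card = (1 + l) ^ U.card := by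
    have := Finset.sum_pow_mul_eq_add_pow l 1 U
    simp only [one_pow, mul_one] at this
    rw [this, add_comm]
  rw [← h, ← nsmul_eq_mul]
  calc _ = ∑ S ∈ U.powerset.filter (fun S => S.card ≤ k), l ^ k := by simp
    _ ≤ ∑ S ∈ U.powerset.filter (fun S => S.card ≤ k), l ^ S.card := by
        apply Finset.sum_le_sum
        intro S hS
        exact pow_le_pow_of_le_one h0.le h1 (Finset.mem_filter.mp hS).2
    _ ≤ _ := Finset.sum_le_sum_of_subset_of_nonneg (Finset.filter_subset _ _)
        (fun _ _ _ => by positivity)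

open Classical in
lemma max_blue {α ρ : Type*} (Red : ρ → α → α → Prop) (y : ρ) (V : Finset α) :
    ∃ I ⊆ V, BlueIn Red y I ∧ ∀ J ⊆ V, BlueIn Red y J → J.card ≤ I.card := by
  have hne : (V.powerset.filter (fun J => BlueIn Red y J)).Nonempty :=
    ⟨∅, Finset.mem_filter.mpr ⟨by simp, fun p hp => by simp at hp⟩⟩
  obtain ⟨I, hI, hmax⟩ := Finset.exists_max_image _ Finset.card hne
  simp only [Finset.mem_filter, Finset.mem_powerset] at hI hmax
  exact ⟨I, hI.1, hI.2, fun J h1 h2 => hmax J ⟨h1, h2⟩⟩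

open Classical in
lemma pure_bound {α : Type*} (r a n : ℕ) (Red : Fin r → α → α → Prop)
    (hrefl : ∀ y p, Red y p p)
    (hsymm : ∀ y p q, Red y p q → Red y q p) (W : Finset α)
    (hr : 0 < r) (ha : 0 < a) (hn : 0 < n) (har : 2 * a ≤ r) (hW : r ≤ W.card)
    (hpair : ∀ p ∈ W, ∀ q ∈ W, p ≠ q →
      (Finset.univ.filter (fun y => Red y p q)).card < a)
    (hclq : ∀ y, ∀ J ⊆ W, BlueIn Red y J → J.card < n) (k : ℕ)
    (hk : 1024 * n * a ^ 2 ≤ r * (k + 1)) :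
    (W.card : ℝ) * ((a : ℝ) / r) ^ k ≤
      2 * 2 ^ (2 * a) * 2 ^ (12 * k) * (1 + (a : ℝ) / r) ^ (2 * a * n) := by
  set N := W.card with hN
  have hNpos : 0 < N := by omega
  set D : Fin r → α → ℕ := fun y x => (W.filter (fun v => Red y x v)).card with hD
  -- S1
  have S1 : ∀ x ∈ W, ∑ y, D y x ≤ a * N := by
    intro x hx
    have e : ∑ y, D y x = ∑ v ∈ W, (Finset.univ.filter (fun y => Red y x v)).card :=
      double_count Finset.univ W (fun y v => Red y x v)
    rw [e, ← Finset.add_sum_erase W _ hx]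
    have h1 : (Finset.univ.filter (fun y => Red y x x)).card ≤ r := by
      simpa using Finset.card_filter_le (Finset.univ : Finset (Fin r)) (fun y => Red y x x)
    have h2 : ∑ v ∈ W.erase x, (Finset.univ.filter (fun y => Red y x v)).card
        ≤ (W.erase x).card • (a - 1) := by
      apply Finset.sum_le_card_nsmul
      intro v hv
      have hv' := Finset.mem_erase.mp hv
      have := hpair x hx v hv'.2 (Ne.symm hv'.1)
      omega
    rw [Finset.card_erase_of_mem hx, ← hN, smul_eq_mul] at h2
    have h3 : (N - 1) * (a - 1) ≤ N * (a - 1) := Nat.mul_le_mul_right _ (Nat.sub_le _ _)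
    have h4 : a * N = N * (a - 1) + N := by
      obtain ⟨a', rfl⟩ : ∃ a', a = a' + 1 := ⟨a - 1, by omega⟩
      simp; ring
    omega
  set T : Fin r → ℕ := fun y => ∑ x ∈ W, D y x with hT
  have S2 : ∑ y, T y ≤ a * N * N := by
    rw [hT, Finset.sum_comm]
    calc _ ≤ W.card • (a * N) := Finset.sum_le_card_nsmul _ _ _ S1
      _ = a * N * N := by rw [smul_eq_mul, ← hN]; ring
  -- good rows
  have hbad : 4 * (Finset.univ.filter (fun y => ¬ (r * T y ≤ 4 * a * N * N))).card ≤ r := by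
    have := markov_card Finset.univ (fun y => ¬ (r * T y ≤ 4 * a * N * N)) (fun y => r * T y)
      (4 * a * N * N) (by intro y _ h; exact (not_le.mp h).le)
    rw [← Finset.mul_sum] at this
    have h2 := Nat.mul_le_mul_left r S2
    have h3 : (a * N * N) * (4 * (Finset.univ.filter
      (fun y => ¬ (r * T y ≤ 4 * a * N * N))).card) ≤ (a * N * N) * r := by
      nlinarith
    exact Nat.le_of_mul_le_mul_left h3 (by positivity)
  have hGcard := Finset.card_filter_add_card_filter_not (s := (Finset.univ : Finset (Fin r)))
    (fun y => r * T y ≤ 4 * a * N * N)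
  rw [Finset.card_univ, Fintype.card_fin] at hGcard
  obtain ⟨M, hMG, hMcard⟩ := Finset.exists_subset_card_eq
    (s := Finset.univ.filter (fun y => r * T y ≤ 4 * a * N * N))
    (n := min (Finset.univ.filter (fun y => r * T y ≤ 4 * a * N * N)).card (2 * a))
    (min_le_left _ _)
  have hM1 : M.card ≤ 2 * a := by omega
  have hM2 : 3 * a ≤ 2 * M.card := by omega
  have hMT : ∀ y ∈ M, r * T y ≤ 4 * a * N * N := by
    intro y hy; exact (Finset.mem_filter.mp (hMG hy)).2
  -- S3
  set Lo : Fin r → α → Prop := fun y x => r * D y x ≤ 128 * a * N with hLo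
  have S3 : ∀ y ∈ M, 32 * (W.filter (fun x => ¬ Lo y x)).card ≤ N := by
    intro y hy
    have := markov_card W (fun x => ¬ Lo y x) (fun x => r * D y x) (128 * a * N)
      (by intro x _ h; exact (not_le.mp h).le)
    rw [← Finset.mul_sum] at this
    have h2 := hMT y hy
    have h3 : (4 * a * N) * (32 * (W.filter (fun x => ¬ Lo y x)).card) ≤ (4 * a * N) * N := by
      have : r * T y = r * ∑ x ∈ W, D y x := rfl
      nlinarith
    exact Nat.le_of_mul_le_mul_left h3 (by positivity)
  -- S4
  have S4 : 4 * (W.filter (fun v => a < 4 * (M.filter (fun y => ¬ Lo y v)).card)).card ≤ N := by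
    have h1 := markov_card W (fun v => a < 4 * (M.filter (fun y => ¬ Lo y v)).card)
      (fun v => 4 * (M.filter (fun y => ¬ Lo y v)).card) a (by intro x _ h; exact h.le)
    rw [← Finset.mul_sum, double_count W M (fun v y => ¬ Lo y v)] at h1
    have h2 : ∑ y ∈ M, 32 * (W.filter (fun x => ¬ Lo y x)).card ≤ M.card • N :=
      Finset.sum_le_card_nsmul _ _ _ S3
    rw [← Finset.mul_sum, smul_eq_mul] at h2
    have h3 : M.card * N ≤ 2 * a * N := Nat.mul_le_mul_right _ hM1
    have h4 : a * (4 * (W.filter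
        (fun v => a < 4 * (M.filter (fun y => ¬ Lo y v)).card)).card) ≤ a * N := by
      nlinarith
    exact Nat.le_of_mul_le_mul_left h4 ha
  -- S5
  choose I hIV hIb hImax using fun y => max_blue Red y (W.filter (fun x => Lo y x))
  have hIW : ∀ y, I y ⊆ W := fun y => (hIV y).trans (Finset.filter_subset _ _)
  set U : Finset (Σ _ : Fin r, α) := M.sigma I with hU
  have hUcard : U.card ≤ 2 * a * n := by
    rw [hU, Finset.card_sigma]
    calc _ ≤ M.card • n := Finset.sum_le_card_nsmul _ _ _
            (fun y _ => (hclq y _ (hIW y) (hIb y)).le)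
      _ ≤ 2 * a * n := by rw [smul_eq_mul]; exact Nat.mul_le_mul_right _ hM1
  set P : α → Finset (Σ _ : Fin r, α) := fun v => U.filter (fun c => Red c.1 c.2 v) with hP
  have S5 : 4 * (W.filter (fun v => k < (P v).card)).card ≤ N := by
    have h1 := markov_card W (fun v => k < (P v).card)
      (fun v => r * (P v).card) (1024 * n * a ^ 2) (by
        intro x _ h
        exact hk.trans (Nat.mul_le_mul_left _ h))
    rw [← Finset.mul_sum, double_count W U (fun v c => Red c.1 c.2 v), Finset.mul_sum] at h1
    have h2 : ∑ c ∈ U, r * (W.filter (fun v => Red c.1 c.2 v)).card ≤ U.card • (128 * a * N) := by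
      apply Finset.sum_le_card_nsmul
      intro c hc
      rw [hU, Finset.mem_sigma] at hc
      exact (Finset.mem_filter.mp (hIV _ hc.2)).2
    rw [smul_eq_mul] at h2
    have h3 : U.card * (128 * a * N) ≤ 2 * a * n * (128 * a * N) := Nat.mul_le_mul_right _ hUcard
    have h4 : (256 * n * a ^ 2) * (4 * (W.filter (fun v => k < (P v).card)).card)
        ≤ (256 * n * a ^ 2) * N := by
      calc _ = 1024 * n * a ^ 2 * (W.filter (fun v => k < (P v).card)).card := by ring
        _ ≤ 2 * a * n * (128 * a * N) := h1.trans (h2.trans h3)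
        _ = _ := by ring
    exact Nat.le_of_mul_le_mul_left h4 (by positivity)
  -- S6
  set Gd := W.filter (fun v => ¬ (a < 4 * (M.filter (fun y => ¬ Lo y v)).card) ∧
    ¬ (k < (P v).card)) with hGd
  have S6 : N ≤ 2 * Gd.card := by
    have : W ⊆ Gd ∪ (W.filter (fun v => a < 4 * (M.filter (fun y => ¬ Lo y v)).card) ∪
        W.filter (fun v => k < (P v).card)) := by
      intro v hv
      simp only [hGd, Finset.mem_union, Finset.mem_filter]
      tauto
    have h1 := (Finset.card_le_card this).trans (Finset.card_union_le _ _)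
    have h2 := Finset.card_union_le (W.filter
      (fun v => a < 4 * (M.filter (fun y => ¬ Lo y v)).card)) (W.filter (fun v => k < (P v).card))
    omega
  have hfib : ∀ c ∈ M.powerset ×ˢ (U.powerset.filter (fun S => S.card ≤ k)),
      (Gd.filter (fun v => (M.filter (fun y => Lo y v), P v) = c)).card ≤ 2 ^ (12 * k) := by
    rintro ⟨M', S⟩ hc
    simp only [Finset.mem_product, Finset.mem_powerset, Finset.mem_filter] at hc
    rcases Finset.eq_empty_or_nonempty
      (Gd.filter (fun v => (M.filter (fun y => Lo y v), P v) = (M', S))) with h0 | ⟨v0, hv0⟩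
    · rw [h0]; simp
    have hmem : ∀ v ∈ Gd.filter (fun v => (M.filter (fun y => Lo y v), P v) = (M', S)),
        v ∈ W ∧ 4 * (M.filter (fun y => ¬ Lo y v)).card ≤ a ∧
          M.filter (fun y => Lo y v) = M' ∧ P v = S := by
      intro v hv
      simp only [hGd, Finset.mem_filter, Prod.mk.injEq, not_lt] at hv
      exact ⟨hv.1.1, hv.1.2.1, hv.2.1, hv.2.2⟩
    have hM' : 5 * a ≤ 4 * M'.card := by
      obtain ⟨_, h1, h2, _⟩ := hmem v0 hv0
      have := Finset.card_filter_add_card_filter_not (s := M) (fun y => Lo y v0)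
      rw [h2] at this
      omega
    have hM'le : M'.card ≤ 2 * a := (Finset.card_le_card hc.1).trans hM1
    refine triv_bound Red hsymm M' (M'.card - a + 1) (2 * a) hM'le (by omega) k _
      (fun y => (((I y).filter (fun x => (⟨y, x⟩ : Σ _ : Fin r, α) ∈ S))).card) ?_ ?_ ?_
    · intro p hp q hq hpq
      have h1 := hpair p (hmem p hp).1 q (hmem q hq).1 hpq
      have h2 := Finset.card_filter_add_card_filter_not (s := M') (fun y => Red y p q)
      have h3 : (M'.filter (fun y => Red y p q)).card ≤
          (Finset.univ.filter (fun y => Red y p q)).card :=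
        Finset.card_le_card (Finset.filter_subset_filter _ (Finset.subset_univ _))
      omega
    · intro y hy J hJ hJb
      have hyM : y ∈ M := hc.1 hy
      -- elements of J are blue to I y \ S
      have hblue : ∀ v ∈ J, ∀ x ∈ (I y).filter (fun x => (⟨y, x⟩ : Σ _ : Fin r, α) ∉ S),
          ¬ Red y x v := by
        intro v hv x hx hred
        rw [Finset.mem_filter] at hx
        apply hx.2
        rw [← (hmem v (hJ hv)).2.2.2]
        simp only [hP, hU, Finset.mem_filter, Finset.mem_sigma]
        exact ⟨⟨hyM, hx.1⟩, hred⟩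
      have hdisj : Disjoint J ((I y).filter (fun x => (⟨y, x⟩ : Σ _ : Fin r, α) ∉ S)) := by
        rw [Finset.disjoint_left]
        intro v hv hv'
        exact hblue v hv v hv' (hrefl y v)
      have h1 := hImax y (J ∪ (I y).filter (fun x => (⟨y, x⟩ : Σ _ : Fin r, α) ∉ S)) (by
        apply Finset.union_subset
        · intro v hv
          have h := hmem v (hJ hv)
          have hy' : y ∈ M.filter (fun y => Lo y v) := by rw [h.2.2.1]; exact hy
          exact Finset.mem_filter.mpr ⟨h.1, (Finset.mem_filter.mp hy').2⟩
        · exact (Finset.filter_subset _ _).trans (hIV y)) (by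
        intro p hp q hq hpq
        rcases Finset.mem_union.mp hp with hp | hp <;> rcases Finset.mem_union.mp hq with hq | hq
        · exact hJb p hp q hq hpq
        · exact fun h => hblue p hp q hq (hsymm _ _ _ h)
        · exact hblue q hq p hp
        · exact hIb y p (Finset.mem_filter.mp hp).1 q (Finset.mem_filter.mp hq).1 hpq)
      rw [Finset.card_union_of_disjoint hdisj] at h1
      have h2 := Finset.card_filter_add_card_filter_not (s := I y)
        (fun x => (⟨y, x⟩ : Σ _ : Fin r, α) ∈ S)
      show J.card ≤ _
      omega
    · rw [← Finset.card_sigma]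
      refine (Finset.card_le_card ?_).trans hc.2.2
      rintro ⟨y, x⟩ h
      simp only [Finset.mem_sigma, Finset.mem_filter] at h
      exact h.2.2
  have hcard := Finset.card_le_mul_card_image_of_maps_to
    (s := Gd) (t := M.powerset ×ˢ (U.powerset.filter (fun S => S.card ≤ k)))
    (f := fun v => (M.filter (fun y => Lo y v), P v)) (by
      intro v hv
      simp only [hGd, Finset.mem_filter, not_lt] at hv
      simp only [Finset.mem_product, Finset.mem_powerset, Finset.mem_filter]
      exact ⟨Finset.filter_subset _ _, Finset.filter_subset _ _, hv.2.2⟩) _ hfib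
  rw [Finset.card_product, Finset.card_powerset] at hcard
  have hrR : (0 : ℝ) < r := by exact_mod_cast hr
  have haR : (0 : ℝ) < a := by exact_mod_cast ha
  have hl0 : (0 : ℝ) < (a : ℝ) / r := by positivity
  have hl1 : (a : ℝ) / r ≤ 1 := by
    rw [div_le_one hrR]; exact_mod_cast (by omega : a ≤ r)
  have hpat := pattern_count U k _ hl0 hl1
  have hpat2 : (1 + (a : ℝ) / r) ^ U.card ≤ (1 + (a : ℝ) / r) ^ (2 * a * n) :=
    pow_le_pow_right₀ (by linarith) hUcard
  set Q := (U.powerset.filter (fun S => S.card ≤ k)).card with hQ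
  have hcR : (N : ℝ) ≤ 2 * (2 ^ (12 * k) * (2 ^ M.card * Q)) := by
    exact_mod_cast S6.trans (Nat.mul_le_mul_left 2 hcard)
  have hM1R : (2 : ℝ) ^ M.card ≤ 2 ^ (2 * a) := pow_le_pow_right₀ (by norm_num) hM1
  calc (N : ℝ) * ((a : ℝ) / r) ^ k
      ≤ 2 * (2 ^ (12 * k) * (2 ^ M.card * Q)) * ((a : ℝ) / r) ^ k := by gcongr
    _ = 2 * 2 ^ M.card * 2 ^ (12 * k) * (Q * ((a : ℝ) / r) ^ k) := by ring
    _ ≤ 2 * 2 ^ (2 * a) * 2 ^ (12 * k) * (1 + (a : ℝ) / r) ^ (2 * a * n) := by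
        gcongr
        exact hpat.trans hpat2

lemma numeric_bound (r a n k : ℕ) (w : ℝ) (u ℓ : ℝ) (hr : 0 < r) (ha : 0 < a)
    (hu : u = (n : ℝ) * a ^ 2 / r) (hℓ : ℓ = Real.logb 2 ((r : ℝ) / a))
    (hru : (r : ℝ) ≤ u) (hℓ1 : 1 ≤ ℓ) (har : 2 * a ≤ r) (hk : (k : ℝ) ≤ 1024 * u)
    (h : w * ((a : ℝ) / r) ^ k ≤
      2 * 2 ^ (2 * a) * 2 ^ (12 * k) * (1 + (a : ℝ) / r) ^ (2 * a * n)) :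
    w ≤ (2 : ℝ) ^ (14000 * (u * ℓ)) := by
  have hrR : (0 : ℝ) < r := by exact_mod_cast hr
  have haR : (0 : ℝ) < a := by exact_mod_cast ha
  have har' : (2 : ℝ) * a ≤ r := by exact_mod_cast har
  have hr1 : (1 : ℝ) ≤ r := by exact_mod_cast hr
  have e1 : ((a : ℝ) / r) ^ k = (2 : ℝ) ^ (-(ℓ * k)) := by
    have : (2 : ℝ) ^ ℓ = (r : ℝ) / a := by
      rw [hℓ]; exact Real.rpow_logb (by norm_num) (by norm_num) (by positivity)
    rw [Real.rpow_neg (by norm_num), Real.rpow_mul (by norm_num), this, Real.rpow_natCast,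
      ← inv_pow, inv_div]
  have e2 : (1 + (a : ℝ) / r) ^ (2 * a * n) ≤ (2 : ℝ) ^ (4 * u) := by
    have h1 : 1 + (a : ℝ) / r ≤ Real.exp ((a : ℝ) / r) := by
      have := Real.add_one_le_exp ((a : ℝ) / r); linarith
    have h2 : (1 + (a : ℝ) / r) ^ (2 * a * n) ≤ Real.exp ((a : ℝ) / r) ^ (2 * a * n) := by
      gcongr
    rw [← Real.exp_nat_mul] at h2
    have h3 : ((2 * a * n : ℕ) : ℝ) * ((a : ℝ) / r) = 2 * u := by
      rw [hu]; push_cast; ring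
    rw [h3] at h2
    refine h2.trans ?_
    rw [Real.rpow_def_of_pos (by norm_num)]
    apply Real.exp_le_exp.mpr
    have := Real.log_two_gt_d9
    nlinarith
  have e3 : (2 : ℝ) * 2 ^ (2 * a) * 2 ^ (12 * k) = (2 : ℝ) ^ ((1 : ℝ) + 2 * a + 12 * k) := by
    rw [Real.rpow_add (by norm_num), Real.rpow_add (by norm_num), Real.rpow_one]
    rw [← Real.rpow_natCast, ← Real.rpow_natCast]; push_cast; rfl
  have h4 : w * (2 : ℝ) ^ (-(ℓ * k)) ≤ (2 : ℝ) ^ ((1 : ℝ) + 2 * a + 12 * k + 4 * u) := by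
    rw [← e1, Real.rpow_add (by norm_num), ← e3]
    exact h.trans (by gcongr)
  have h5 : w = w * (2 : ℝ) ^ (-(ℓ * k)) * (2 : ℝ) ^ (ℓ * k) := by
    rw [mul_assoc, ← Real.rpow_add (by norm_num)]; simp
  rw [h5]
  calc _ ≤ (2 : ℝ) ^ ((1 : ℝ) + 2 * a + 12 * k + 4 * u) * (2 : ℝ) ^ (ℓ * k) := by gcongr
    _ = (2 : ℝ) ^ ((1 : ℝ) + 2 * a + 12 * k + 4 * u + ℓ * k) := by
        rw [← Real.rpow_add (by norm_num)]
    _ ≤ _ := by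
        apply Real.rpow_le_rpow_of_exponent_le (by norm_num)
        have h6 : u ≤ u * ℓ := by nlinarith
        have h7 : ℓ * k ≤ 1024 * (u * ℓ) := by nlinarith
        linarith

/-- There is `C > 0` such that for all positive integers `r, a, n, N, N'` with
`r ≥ 2a`, `n ≥ (r/a)²` and `N ≥ 2^(C n a² r⁻¹ log₂(r/a)) · N'`: if the edges of
`Γ_{N,r}` are colored red/blue with every vertical edge red, then there is a blue `K_n`
or a set `X` of `N'` columns, a column `x ∈ X` and a set `Y` of `a` rows such that for
every `x' ∈ X` with `x' ≠ x` and every `y ∈ Y`, the horizontal edge between `(x,y)` and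
`(x',y)` is red. -/
theorem grid_iteration_lemma :
    ∃ C : ℝ, 0 < C ∧ ∀ r a n N N' : ℕ,
      0 < r → 0 < a → 0 < n → 0 < N → 0 < N' →
      2 * a ≤ r → ((r : ℝ) / a) ^ 2 ≤ (n : ℝ) →
      (2 : ℝ) ^ (C * n * a ^ 2 / r * Real.logb 2 ((r : ℝ) / a)) * N' ≤ (N : ℝ) →
      ∀ χ : Sym2 (Fin N × Fin r) → Bool,
        (∀ x : Fin N, ∀ y y' : Fin r, y ≠ y' → χ s((x, y), (x, y')) = true) →
        HasBlueGridClique N r n χ ∨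
          ∃ X : Finset (Fin N), X.card = N' ∧ ∃ x ∈ X, ∃ Y : Finset (Fin r),
            Y.card = a ∧ ∀ x' ∈ X, x' ≠ x → ∀ y ∈ Y,
              χ s((x, y), (x', y)) = true := by
  classical
  refine ⟨20000, by norm_num, ?_⟩
  intro r a n N N' hr ha hn hN hN' har hrn hbig χ _
  by_contra hcon
  push Not at hcon
  obtain ⟨hblue, hred⟩ := hcon
  have hrR : (0 : ℝ) < r := by exact_mod_cast hr
  have haR : (0 : ℝ) < a := by exact_mod_cast ha
  have hN'R : (0 : ℝ) < N' := by exact_mod_cast hN'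
  have har' : (2 : ℝ) * a ≤ r := by exact_mod_cast har
  obtain ⟨u, hu⟩ : ∃ u : ℝ, u = (n : ℝ) * a ^ 2 / r := ⟨_, rfl⟩
  obtain ⟨ℓ, hℓ⟩ : ∃ ℓ : ℝ, ℓ = Real.logb 2 ((r : ℝ) / a) := ⟨_, rfl⟩
  have hru : (r : ℝ) ≤ u := by
    rw [hu, le_div_iff₀ hrR]
    rw [div_pow, div_le_iff₀ (by positivity)] at hrn
    nlinarith
  have hℓ1 : 1 ≤ ℓ := by
    rw [hℓ, Real.le_logb_iff_rpow_le (by norm_num) (by positivity), Real.rpow_one,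
      le_div_iff₀ haR]
    exact har'
  obtain ⟨Red, hRed⟩ : ∃ Red : Fin r → Fin N → Fin N → Prop,
      ∀ y p q, Red y p q ↔ (p = q ∨ χ s((p, y), (q, y)) = true) := ⟨_, fun _ _ _ => Iff.rfl⟩
  have hrefl : ∀ y p, Red y p p := fun y p => (hRed y p p).mpr (Or.inl rfl)
  have hsymm : ∀ y p q, Red y p q → Red y q p := by
    intro y p q h
    rw [hRed] at h ⊢
    rcases h with h | h
    · exact Or.inl h.symm
    · right; rw [Sym2.eq_swap]; exact h
  -- no blue cliques
  have hclq : ∀ y, ∀ J : Finset (Fin N), BlueIn Red y J → J.card < n := by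
    intro y J hJ
    by_contra hge
    push Not at hge
    obtain ⟨K, hKJ, hK⟩ := Finset.exists_subset_card_eq hge
    apply hblue
    refine ⟨K.image (fun p => (p, y)), ?_, ?_⟩
    · rw [Finset.card_image_of_injective _ (fun p q h => (Prod.mk.inj h).1), hK]
    · intro p hp q hq hpq
      obtain ⟨p, hpK, rfl⟩ := Finset.mem_image.mp hp
      obtain ⟨q, hqK, rfl⟩ := Finset.mem_image.mp hq
      have hne : p ≠ q := fun h => hpq (by rw [h])
      have h := hJ p (hKJ hpK) q (hKJ hqK) hne
      rw [hRed] at h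
      push Not at h
      exact ⟨Or.inr ⟨hne, rfl⟩, by simpa using h.2⟩
  -- bad pairs
  obtain ⟨Bad, hBad⟩ : ∃ Bad : Unit → Fin N → Fin N → Prop, ∀ t p q, Bad t p q ↔
      (p ≠ q ∧ a ≤ (Finset.univ.filter (fun y => Red y p q)).card) :=
    ⟨_, fun _ _ _ => Iff.rfl⟩
  have hBadsymm : ∀ t p q, Bad t p q → Bad t q p := by
    intro t p q h
    rw [hBad] at h ⊢
    refine ⟨h.1.symm, ?_⟩
    have : Finset.univ.filter (fun y => Red y q p) = Finset.univ.filter (fun y => Red y p q) := by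
      ext y; simp only [Finset.mem_filter, Finset.mem_univ, true_and]
      exact ⟨hsymm _ _ _, hsymm _ _ _⟩
    rw [this]; exact h.2
  have hdeg : ∀ p, (Finset.univ.filter (fun q => Bad () p q)).card ≤ N' * 2 ^ r := by
    intro p
    have := Finset.card_le_mul_card_image_of_maps_to
      (s := Finset.univ.filter (fun q => Bad () p q))
      (t := (Finset.univ : Finset (Finset (Fin r))))
      (f := fun q => Finset.univ.filter (fun y => Red y p q)) (fun _ _ => Finset.mem_univ _) N' (by
        intro R _
        by_contra hlt
        push Not at hlt
        obtain ⟨Z, hZ, hZc⟩ := Finset.exists_subset_card_eq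
          (show N' - 1 ≤ _ from (Nat.sub_le _ _).trans hlt.le)
        have hmem : ∀ q ∈ (Finset.univ.filter (fun q => Bad () p q)).filter
            (fun q => Finset.univ.filter (fun y => Red y p q) = R),
            p ≠ q ∧ a ≤ R.card ∧ ∀ y ∈ R, Red y p q := by
          intro q hq
          simp only [Finset.mem_filter, Finset.mem_univ, true_and] at hq
          obtain ⟨h1, h2⟩ := hq
          rw [hBad, h2] at h1
          refine ⟨h1.1, h1.2, ?_⟩
          intro y hy
          rw [← h2] at hy
          exact (Finset.mem_filter.mp hy).2
        obtain ⟨q0, hq0⟩ := Finset.card_pos.mp (lt_of_le_of_lt (Nat.zero_le _) hlt)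
        obtain ⟨Y, hYR, hY⟩ := Finset.exists_subset_card_eq (hmem q0 hq0).2.1
        have hpZ : p ∉ Z := fun h => (hmem p (hZ h)).1 rfl
        obtain ⟨x', hx', hne, y, hy, hc⟩ := hred (insert p Z)
          (by rw [Finset.card_insert_of_notMem hpZ, hZc]; omega) p
          (Finset.mem_insert_self _ _) Y hY
        rcases Finset.mem_insert.mp hx' with h | h
        · exact hne h
        · have h1 := (hmem x' (hZ h)).2.2 y (hYR hy)
          rw [hRed] at h1
          rcases h1 with h1 | h1
          · exact hne h1.symm
          · exact hc h1)
    simpa using this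
  obtain ⟨W, _, hWgood, hWmax⟩ := max_blue Bad () (Finset.univ : Finset (Fin N))
  have hcover : (Finset.univ : Finset (Fin N)) ⊆
      W.biUnion (fun w => insert w (Finset.univ.filter (fun q => Bad () w q))) := by
    intro v _
    by_contra hv
    simp only [Finset.mem_biUnion, Finset.mem_insert, Finset.mem_filter, Finset.mem_univ,
      true_and, not_exists, not_and, not_or] at hv
    have hvW : v ∉ W := fun h => (hv v h).1 rfl
    have := hWmax (insert v W) (Finset.subset_univ _) (by
      intro p hp q hq hpq
      rcases Finset.mem_insert.mp hp with hp | hp <;>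
      rcases Finset.mem_insert.mp hq with hq | hq
      · exact absurd (hp.trans hq.symm) hpq
      · rw [hp]; exact fun h => (hv q hq).2 (hBadsymm _ _ _ h)
      · rw [hq]; exact (hv p hp).2
      · exact hWgood p hp q hq hpq)
    rw [Finset.card_insert_of_notMem hvW] at this
    omega
  have hNW : N ≤ W.card * (N' * 2 ^ r + 1) := by
    have h1 := Finset.card_le_card hcover
    rw [Finset.card_univ, Fintype.card_fin] at h1
    refine h1.trans (Finset.card_biUnion_le_card_mul _ _ _ ?_)
    intro w _
    exact (Finset.card_insert_le _ _).trans (Nat.add_le_add_right (hdeg w) 1)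
  have hul : u ≤ u * ℓ := by nlinarith
  -- bound on W
  have hWb : (W.card : ℝ) ≤ (2 : ℝ) ^ (14000 * (u * ℓ)) := by
    rcases lt_or_ge W.card r with hlt | hge
    · have h1 : (W.card : ℝ) ≤ (2 : ℝ) ^ r := by
        exact_mod_cast (hlt.trans Nat.lt_two_pow_self).le
      refine h1.trans ?_
      rw [← Real.rpow_natCast]
      apply Real.rpow_le_rpow_of_exponent_le (by norm_num)
      linarith
    · have hu0 : 0 ≤ 1024 * u := by linarith
      refine numeric_bound r a n ⌊1024 * u⌋₊ W.card u ℓ hr ha hu hℓ hru hℓ1 har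
        (Nat.floor_le hu0) ?_
      refine pure_bound r a n Red hrefl hsymm W hr ha hn har hge ?_ (fun y J _ h => hclq y J h) _ ?_
      · intro p hp q hq hpq
        have := hWgood p hp q hq hpq
        rw [hBad] at this
        push Not at this
        exact this hpq
      · have h1 := (Nat.lt_floor_add_one (1024 * u)).le
        have h2 : (r : ℝ) * (1024 * u) = 1024 * n * a ^ 2 := by
          rw [hu]; field_simp
        have h3 : (1024 * n * a ^ 2 : ℝ) ≤ r * ((⌊1024 * u⌋₊ : ℝ) + 1) := by
          rw [← h2]; gcongr
        exact_mod_cast h3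
  have hfin : (N : ℝ) ≤ (2 : ℝ) ^ (14000 * (u * ℓ)) * ((2 : ℝ) ^ ((r : ℝ) + 1) * N') := by
    have h1 : (N : ℝ) ≤ W.card * (N' * 2 ^ r + 1) := by exact_mod_cast hNW
    have h2 : (N' * 2 ^ r + 1 : ℝ) ≤ (2 : ℝ) ^ ((r : ℝ) + 1) * N' := by
      rw [Real.rpow_add (by norm_num), Real.rpow_natCast, Real.rpow_one]
      have h3 : (1 : ℝ) ≤ 2 ^ r := one_le_pow₀ (by norm_num)
      have h4 : (1 : ℝ) ≤ N' := by exact_mod_cast hN'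
      nlinarith
    exact h1.trans (by gcongr)
  have hexp : (20000 : ℝ) * n * a ^ 2 / r * Real.logb 2 ((r : ℝ) / a) = 20000 * (u * ℓ) := by
    rw [← hℓ, hu]; ring
  rw [hexp] at hbig
  have hr1 : (1 : ℝ) ≤ r := by exact_mod_cast hr
  have hlt : (2 : ℝ) ^ (14000 * (u * ℓ)) * ((2 : ℝ) ^ ((r : ℝ) + 1) * N')
      < (2 : ℝ) ^ (20000 * (u * ℓ)) * N' := by
    rw [← mul_assoc, ← Real.rpow_add (by norm_num)]
    apply mul_lt_mul_of_pos_right _ hN'R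
    apply Real.rpow_lt_rpow_of_exponent_lt (by norm_num)
    linarith
  linarith
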